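/- arXiv:2309.07565 — 2 statements merged into one kernel-verified Lean document; each statement's English description precedes it below -/
import Mathlib

section
/- Let α, β, d, t, p, q ∈ ℝ with p ≥ 0. If R_q(S_p(L_t(0,0,α))) = (d, 0, β) (an LSR Dubins path: first a left arc of length t, then a straight segment of length p, then a right arc of length q), then p = sqrt(−2 + d² + 2·cos(α − β) + 2d·(sin α + sin β)). -/
open Real

/-- Left-turn operator: arc of length `v` along the unit left-turning circle. -/
noncomputable def Lop (v : ℝ) : ℝ × ℝ × ℝ → ℝ × ℝ × ℝ :=
  fun c => (c.1 + Real.sin (c.2.2 + v) - Real.sin c.2.2,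
            c.2.1 - Real.cos (c.2.2 + v) + Real.cos c.2.2,
            c.2.2 + v)

/-- Right-turn operator: arc of length `v` along the unit right-turning circle. -/
noncomputable def Rop (v : ℝ) : ℝ × ℝ × ℝ → ℝ × ℝ × ℝ :=
  fun c => (c.1 - Real.sin (c.2.2 - v) + Real.sin c.2.2,
            c.2.1 + Real.cos (c.2.2 - v) - Real.cos c.2.2,
            c.2.2 - v)

/-- Straight-motion operator: straight segment of length `v`. -/
noncomputable def Sop (v : ℝ) : ℝ × ℝ × ℝ → ℝ × ℝ × ℝ :=
  fun c => (c.1 + v * Real.cos c.2.2, c.2.1 + v * Real.sin c.2.2, c.2.2)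

/-!
A left arc fixes the centre of the left-turning circle and a right arc fixes the centre of the
right-turning circle, so the straight segment alone determines the distance between the initial left
centre and the final right centre. In the frame of the segment these centres are offset by `p`
along it and by two unit radii across it, hence their squared distance is `p² + 4`.
-/

/-- The centre of the unit circle followed by a left turn from the configuration `c`, with the
plane encoded as `ℂ`. It lies at unit distance to the left of the heading. -/
noncomputable def leftCenter (c : ℝ × ℝ × ℝ) : ℂ :=
  ⟨c.1 - sin c.2.2, c.2.1 + cos c.2.2⟩

/-- The centre of the unit circle followed by a right turn from the configuration `c`, with the
plane encoded as `ℂ`. It lies at unit distance to the right of the heading. -/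
noncomputable def rightCenter (c : ℝ × ℝ × ℝ) : ℂ :=
  ⟨c.1 + sin c.2.2, c.2.1 - cos c.2.2⟩

theorem leftCenter_Lop (t : ℝ) (c : ℝ × ℝ × ℝ) : leftCenter (Lop t c) = leftCenter c := by
  simp only [leftCenter, Lop, Complex.mk.injEq]
  constructor <;> ring

theorem rightCenter_Rop (q : ℝ) (c : ℝ × ℝ × ℝ) : rightCenter (Rop q c) = rightCenter c := by
  simp only [rightCenter, Rop, Complex.mk.injEq]
  constructor <;> ring

theorem rightCenter_Sop_sub_leftCenter (p : ℝ) (c : ℝ × ℝ × ℝ) :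
    rightCenter (Sop p c) - leftCenter c = ⟨p, -2⟩ * Complex.exp (c.2.2 * Complex.I) := by
  apply Complex.ext <;>
    simp only [leftCenter, rightCenter, Sop, Complex.sub_re, Complex.sub_im, Complex.mul_re,
      Complex.mul_im, Complex.exp_ofReal_mul_I_re, Complex.exp_ofReal_mul_I_im] <;>
    ring

theorem dist_leftCenter_rightCenter_Sop_sq (p : ℝ) (c : ℝ × ℝ × ℝ) :
    dist (leftCenter c) (rightCenter (Sop p c)) ^ 2 = p ^ 2 + 4 := by
  rw [dist_eq_norm', rightCenter_Sop_sub_leftCenter, norm_mul, Complex.norm_exp_ofReal_mul_I,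
    mul_one, Complex.sq_norm, Complex.normSq_mk]
  ring

theorem dist_leftCenter_rightCenter_sq_sub_four (α β d : ℝ) :
    dist (leftCenter (0, 0, α)) (rightCenter (d, 0, β)) ^ 2 - 4 =
      -2 + d ^ 2 + 2 * cos (α - β) + 2 * d * (sin α + sin β) := by
  rw [dist_eq_norm', Complex.sq_norm, Complex.normSq_apply, cos_sub]
  simp only [leftCenter, rightCenter, Complex.sub_re, Complex.sub_im]
  linear_combination sin_sq_add_cos_sq α + sin_sq_add_cos_sq β

theorem lsr_straight_length_general {c c' : ℝ × ℝ × ℝ} {t p q : ℝ}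
    (h : Rop q (Sop p (Lop t c)) = c') :
    |p| = √(dist (leftCenter c) (rightCenter c') ^ 2 - 4) := by
  rw [← h, rightCenter_Rop, ← leftCenter_Lop t c, dist_leftCenter_rightCenter_Sop_sq,
    add_sub_cancel_right, sqrt_sq_eq_abs]

theorem lsr_straight_length (α β d t p q : ℝ) (hp : 0 ≤ p)
    (h : Rop q (Sop p (Lop t (0, 0, α))) = (d, 0, β)) :
    p = Real.sqrt (-2 + d ^ 2 + 2 * Real.cos (α - β) + 2 * d * (Real.sin α + Real.sin β)) := by
  rw [← dist_leftCenter_rightCenter_sq_sub_four, ← lsr_straight_length_general h, abs_of_nonneg hp]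
end

section
/- Reversal equivalence for LSR paths: let α, β, d, t, p, q ∈ ℝ. If R_q(S_p(L_t(0,0,α))) = (d, 0, β), then R_t(S_p(L_q(0,0,β))) = (d, 0, α). (An LSR path with initial/final segment lengths (t, q) for orientation pair (α, β) yields a topologically equivalent LSR path with segment lengths (q, t) for the pair (β, α).) -/
open Real

/-!
Driving a path backwards and then turning the plane by a half turn shifts the heading by `π` twice,
so the result is again a forward path. Turning left becomes turning right and conversely, and the
segments are met in the opposite order: the half turn about the midpoint of the two end positions
carries an `LSR` path with segment lengths `(t, p, q)` to one with segment lengths `(q, p, t)`.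
-/

/-- The configuration seen from the reversed path: the heading is reversed and the plane is then
rotated by a half turn, which restores the heading. The parameter `a` is twice the centre of the
half turn, so that positions with sum `a` are exchanged. -/
def halfTurnReversal (a : ℝ × ℝ) (c : ℝ × ℝ × ℝ) : ℝ × ℝ × ℝ :=
  (a.1 - c.1, a.2 - c.2.1, c.2.2)

section Reversal

variable (a : ℝ × ℝ) (v : ℝ) (c : ℝ × ℝ × ℝ)

theorem Rop_halfTurnReversal_Lop :
    Rop v (halfTurnReversal a (Lop v c)) = halfTurnReversal a c := by
  ext <;> simp only [Rop, Lop, halfTurnReversal, add_sub_cancel_right] <;> ring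

theorem Lop_halfTurnReversal_Rop :
    Lop v (halfTurnReversal a (Rop v c)) = halfTurnReversal a c := by
  ext <;> simp only [Rop, Lop, halfTurnReversal, sub_add_cancel] <;> ring

theorem Sop_halfTurnReversal_Sop :
    Sop v (halfTurnReversal a (Sop v c)) = halfTurnReversal a c := by
  ext <;> simp only [Sop, halfTurnReversal] <;> ring

end Reversal

theorem lsr_reversal_equiv_general (a : ℝ × ℝ) {c c' : ℝ × ℝ × ℝ} {t p q : ℝ}
    (h : Rop q (Sop p (Lop t c)) = c') :
    Rop t (Sop p (Lop q (halfTurnReversal a c'))) = halfTurnReversal a c := by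
  rw [← h, Lop_halfTurnReversal_Rop, Sop_halfTurnReversal_Sop, Rop_halfTurnReversal_Lop]

theorem lsr_reversal_equiv (α β d t p q : ℝ)
    (h : Rop q (Sop p (Lop t (0, 0, α))) = (d, 0, β)) :
    Rop t (Sop p (Lop q (0, 0, β))) = (d, 0, α) := by
  simpa [halfTurnReversal] using lsr_reversal_equiv_general (d, 0) h
end
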